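/- Let T > 0 and let (θ̇, ẇ, ż) be smooth functions on [0,T]×ℝ², with θ̇, ż radially symmetric in x and ẇ(t,x) = Ẇ(t,|x|)x/|x| for a smooth Ẇ, such that for each t the functions Γ^β θ̇(t,·), Γ^β ẇ(t,·), Γ^β ż(t,·) are compactly supported in x. Then for every multi-index α there is a constant C_α, independent of t, T and of (θ̇, ẇ, ż), such that for all (t,x) ∈ [0,T]×ℝ²: σ(x)^{1/2}(|Γ^α θ̇(t,x)| + |Γ^α ẇ(t,x)| + |Γ^α ż(t,x)|) ≤ C_α E_{|α|+2}(t)^{1/2}. -/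

import Mathlib

/-!
Fix `t` and put `f = Γ^α u(t)` with `u` one of the components `θ̇`, `ẇ₁`, `ẇ₂`, `ż`. On a strip
`(x, ∞) × (c, d)`, integrating `∂₁|P|²` along a horizontal line and then bounding the values on
each vertical segment by the one-dimensional Sobolev inequality controls `|P|²` at a boundary point
by the `L²` norms of `P`, `∂₁P`, `∂₂P`, `∂₂∂₁P`. In Cartesian coordinates this bounds `|f|²`. In
polar coordinates the angular derivative is `Ω = x₁∂₂ - x₂∂₁` and the area element `r dr ds`
supplies the weight, so that `|x| |f|²` is bounded by the `H¹` norms of `f` and `Ωf`.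

The rotation `Ω` costs no energy: each commutator `[Ω, Γ_a]` is `0` or `±∂_j`, so `Ω` moves past
`Γ^α` at the price of terms of the same order, and on the data `Ωθ̇ = Ωż = 0` by radial symmetry,
while `Ωẇ₁ = -ẇ₂` and `Ωẇ₂ = ẇ₁`.
-/

noncomputable section

open Real MeasureTheory Set

/-- A function of time `t` and space `(x, y)`. -/
abbrev F3 : Type := ℝ → ℝ → ℝ → ℝ

/-- Partial derivative in time. -/
def pt (f : F3) : F3 := fun t x y => deriv (fun s => f s x y) t
/-- Partial derivative in the first space variable. -/
def px (f : F3) : F3 := fun t x y => deriv (fun s => f t s y) x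
/-- Partial derivative in the second space variable. -/
def py (f : F3) : F3 := fun t x y => deriv (fun s => f t x s) y

/-- `∂ = (∂_t, ∂_1, ∂_2)`. -/
def pdi : Fin 3 → F3 → F3 := ![pt, px, py]

/-- The scaling field `X = t∂_t + x₁∂₁ + x₂∂₂`. -/
def Xf (f : F3) : F3 := fun t x y => t * pt f t x y + x * px f t x y + y * py f t x y
/-- The rotation field `Ω = x₁∂₂ − x₂∂₁`. -/
def Om (f : F3) : F3 := fun t x y => x * py f t x y - y * px f t x y
/-- The Lorentz boost `L₁ = t∂₁ + x₁∂_t`. -/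
def L1f (f : F3) : F3 := fun t x y => t * px f t x y + x * pt f t x y
/-- The Lorentz boost `L₂ = t∂₂ + x₂∂_t`. -/
def L2f (f : F3) : F3 := fun t x y => t * py f t x y + y * pt f t x y

/-- The family `Γ = (∂_t, ∂_1, ∂_2, X)`. -/
def GammaF : Fin 4 → F3 → F3 := ![pt, px, py, Xf]

/-- Iterated composition `Γ^α` over a word `α`. -/
def GIter : List (Fin 4) → F3 → F3
  | [], f => f
  | a :: l, f => GammaF a (GIter l f)

/-- The family `Λ = (∂_t, ∂_1, ∂_2, Ω, X, L₁, L₂)`. -/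
def LamF : Fin 7 → F3 → F3 := ![pt, px, py, Om, Xf, L1f, L2f]

/-- Iterated composition `Λ^α` over a word `α`. -/
def LIter : List (Fin 7) → F3 → F3
  | [], f => f
  | a :: l, f => LamF a (LIter l f)

/-- Iterated composition `∂^β` over a word `β`. -/
def PIter : List (Fin 3) → F3 → F3
  | [], f => f
  | a :: l, f => pdi a (PIter l f)

/-- `r = |x|`. -/
def rad (x y : ℝ) : ℝ := Real.sqrt (x ^ 2 + y ^ 2)
/-- `σ₋(t,x) = 1 + |t − |x||`. -/
def sm (t x y : ℝ) : ℝ := 1 + |t - rad x y|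
/-- `σ₊(t,x) = 1 + t + |x|`. -/
def sp (t x y : ℝ) : ℝ := 1 + t + rad x y

/-- `f` is a `C^∞` function of `(t, x)`. -/
def Smooth3 (f : F3) : Prop := ContDiff ℝ (⊤ : ℕ∞) (fun p : ℝ × ℝ × ℝ => f p.1 p.2.1 p.2.2)

/-- `Z₁ = ∂₁ + (x₁/|x|)∂_t`. -/
def Z1 (f : F3) : F3 := fun t x y => px f t x y + (x / rad x y) * pt f t x y
/-- `Z₂ = ∂₂ + (x₂/|x|)∂_t`. -/
def Z2 (f : F3) : F3 := fun t x y => py f t x y + (y / rad x y) * pt f t x y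
/-- The family `Z = (Z₁, Z₂)`. -/
def Zi : Fin 2 → F3 → F3 := ![Z1, Z2]

/-- `f` is radially symmetric in the space variables. -/
def RadialF (f : F3) : Prop := ∀ t x y x' y', rad x y = rad x' y' → f t x y = f t x' y'

/-- The `L²(ℝ²)` norm. -/
def L2n (g : ℝ → ℝ → ℝ) : ℝ := Real.sqrt (∫ q : ℝ × ℝ, (g q.1 q.2) ^ 2)

/-- The `L²` norm over a region `S ⊆ ℝ²`. -/
def L2nS (S : Set (ℝ × ℝ)) (g : ℝ → ℝ → ℝ) : ℝ := Real.sqrt (∫ q in S, (g q.1 q.2) ^ 2)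

/-- The energy `E_n(t) = Σ_{|α|≤n} (‖Γ^αθ̇(t)‖² + ‖Γ^αẇ(t)‖² + ‖Γ^αż(t)‖²)`. -/
def En (θd w1 w2 zd : F3) (n : ℕ) (t : ℝ) : ℝ :=
  ∑ k ∈ Finset.range (n + 1), ∑ w : Fin k → Fin 4,
    ((L2n fun x y => GIter (List.ofFn w) θd t x y) ^ 2
      + (L2n fun x y => GIter (List.ofFn w) w1 t x y) ^ 2
      + (L2n fun x y => GIter (List.ofFn w) w2 t x y) ^ 2
      + (L2n fun x y => GIter (List.ofFn w) zd t x y) ^ 2)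

/-- The weighted energy
`Q_n(t) = Σ_{|α|≤n−1} (‖σ₋∇Γ^αθ̇(t)‖ + ‖σ₋∂_tΓ^αẇ(t)‖ + ‖σ₋∇·Γ^αẇ(t)‖)`. -/
def Qn (θd w1 w2 : F3) (n : ℕ) (t : ℝ) : ℝ :=
  ∑ k ∈ Finset.range n, ∑ w : Fin k → Fin 4,
    (L2n (fun x y => sm t x y *
        Real.sqrt ((px (GIter (List.ofFn w) θd) t x y) ^ 2
          + (py (GIter (List.ofFn w) θd) t x y) ^ 2))
      + L2n (fun x y => sm t x y *
        Real.sqrt ((pt (GIter (List.ofFn w) w1) t x y) ^ 2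
          + (pt (GIter (List.ofFn w) w2) t x y) ^ 2))
      + L2n (fun x y => sm t x y *
        (px (GIter (List.ofFn w) w1) t x y + py (GIter (List.ofFn w) w2) t x y)))

/-- Pointwise product of two functions of `(t,x)`. -/
def mulC (c f : F3) : F3 := fun t x y => c t x y * f t x y

/-- Pointwise sum of two functions of `(t,x)`. -/
def addF (f g : F3) : F3 := fun t x y => f t x y + g t x y

/-- The cutoff `χ(t,x) = χ̂(|x|/(t+2M+2))`. -/
def cutF (M : ℝ) (χhat : ℝ → ℝ) : F3 := fun t x y => χhat (rad x y / (t + 2 * M + 2))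

/-- `χ̂` is a smooth cutoff, `χ̂ = 1` on `(−∞,1/2]`, `χ̂ = 0` on `[3/4,∞)`, `0 ≤ χ̂ ≤ 1`. -/
def IsCutoff (χhat : ℝ → ℝ) : Prop :=
  ContDiff ℝ (⊤ : ℕ∞) χhat ∧ (∀ s, χhat s ∈ Icc (0 : ℝ) 1) ∧
    (∀ s ≤ (1/2 : ℝ), χhat s = 1) ∧ (∀ s, (3/4 : ℝ) ≤ s → χhat s = 0)

section VectorFields

variable {E F : Type*} [NormedAddCommGroup E] [NormedSpace ℝ E]
  [NormedAddCommGroup F] [NormedSpace ℝ F] {V W : E → E} {f g : E → F}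

/-- The derivative `V f` of a function `f` along a vector field `V` on a normed space. -/
def fieldDeriv (V : E → E) (f : E → F) : E → F := fun p => fderiv ℝ f p (V p)

theorem contDiff_fieldDeriv {m n : WithTop ℕ∞} (hV : ContDiff ℝ m V) (hf : ContDiff ℝ n f)
    (hmn : m + 1 ≤ n) : ContDiff ℝ m (fieldDeriv V f) :=
  (hf.fderiv_right hmn).clm_apply hV

theorem hasCompactSupport_fieldDeriv (hf : HasCompactSupport f) (V : E → E) :
    HasCompactSupport (fieldDeriv V f) :=
  (hf.fderiv (𝕜 := ℝ)).mono fun p hp h => hp (by simp [fieldDeriv, h])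

theorem fieldDeriv_add (V : E → E) (hf : Differentiable ℝ f) (hg : Differentiable ℝ g) :
    fieldDeriv V (f + g) = fieldDeriv V f + fieldDeriv V g := by
  funext p
  simp [fieldDeriv, fderiv_add (hf p) (hg p)]

theorem fieldDeriv_const_smul (V : E → E) (c : ℝ) (f : E → F) :
    fieldDeriv V (c • f) = c • fieldDeriv V f := by
  funext p
  simp [fieldDeriv, fderiv_const_smul_field]

theorem fieldDeriv_const_smul_field (c : ℝ) (V : E → E) (f : E → F) :
    fieldDeriv (c • V) f = c • fieldDeriv V f := by
  funext p
  simp [fieldDeriv]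

theorem fieldDeriv_comp {E' : Type*} [NormedAddCommGroup E'] [NormedSpace ℝ E'] {V' : E' → E'}
    {φ : E' → E} (hf : Differentiable ℝ f) (hφ : Differentiable ℝ φ)
    (hrel : ∀ p, fderiv ℝ φ p (V' p) = V (φ p)) :
    fieldDeriv V' (f ∘ φ) = fieldDeriv V f ∘ φ := by
  funext p
  simp only [fieldDeriv, Function.comp_apply, fderiv_comp p (hf _) (hφ p),
    ContinuousLinearMap.comp_apply, hrel]

theorem fieldDeriv_comm (hV : Differentiable ℝ V) (hW : Differentiable ℝ W)
    (hf : ContDiff ℝ 2 f) :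
    fieldDeriv V (fieldDeriv W f)
      = fieldDeriv W (fieldDeriv V f) + fieldDeriv (VectorField.lieBracket ℝ V W) f := by
  funext p
  exact (sub_eq_iff_eq_add'.1
    (VectorField.fderiv_apply_lieBracket hf.contDiffAt (by simp) (hW p) (hV p)).symm)

end VectorFields

section Interval

theorem integrable_norm_sq {X G : Type*} [TopologicalSpace X] [MeasurableSpace X]
    [OpensMeasurableSpace X] {μ : Measure X} [IsFiniteMeasureOnCompacts μ] [NormedAddCommGroup G]
    {f : X → G} (hf : Continuous f) (hsupp : HasCompactSupport f) :
    Integrable (fun x => ‖f x‖ ^ 2) μ := by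
  have hsq : HasCompactSupport fun x => ‖f x‖ ^ 2 := hsupp.norm.comp_left (g := (· ^ 2)) (by simp)
  exact (hf.norm.pow 2).integrable_of_hasCompactSupport hsq

variable {F : Type*} [NormedAddCommGroup F] [InnerProductSpace ℝ F] {g : ℝ → F} {a b : ℝ}

theorem abs_deriv_norm_sq_le (hg : Differentiable ℝ g) (s : ℝ) :
    |deriv (fun s => ‖g s‖ ^ 2) s| ≤ ‖g s‖ ^ 2 + ‖deriv g s‖ ^ 2 := by
  rw [(hg s).hasDerivAt.norm_sq.deriv, abs_mul, abs_two]
  nlinarith [abs_real_inner_le_norm (g s) (deriv g s), two_mul_le_add_sq ‖g s‖ ‖deriv g s‖]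

theorem continuous_norm_sq_add_norm_deriv_sq (hg : ContDiff ℝ 1 g) :
    Continuous fun s => ‖g s‖ ^ 2 + ‖deriv g s‖ ^ 2 :=
  (hg.continuous.norm.pow 2).add ((hg.continuous_deriv le_rfl).norm.pow 2)

theorem abs_norm_sq_sub_norm_sq_le_integral (hg : ContDiff ℝ 1 g) (hab : a ≤ b) :
    |‖g b‖ ^ 2 - ‖g a‖ ^ 2| ≤ ∫ s in a..b, (‖g s‖ ^ 2 + ‖deriv g s‖ ^ 2) := by
  have hsq : ContDiff ℝ 1 fun s => ‖g s‖ ^ 2 := hg.norm_sq ℝ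
  rw [← intervalIntegral.integral_deriv_eq_sub (fun s _ => hsq.differentiable one_ne_zero s)
    ((hsq.continuous_deriv le_rfl).intervalIntegrable _ _), ← norm_eq_abs]
  exact intervalIntegral.norm_integral_le_of_norm_le hab
    (.of_forall fun s _ => abs_deriv_norm_sq_le (hg.differentiable one_ne_zero) s)
    ((continuous_norm_sq_add_norm_deriv_sq hg).intervalIntegrable _ _)

theorem norm_sq_sub_integral_le_norm_sq (hg : ContDiff ℝ 1 g) {x y : ℝ} (hx : x ∈ Icc a b)
    (hy : y ∈ Icc a b) :
    ‖g x‖ ^ 2 - ∫ s in a..b, (‖g s‖ ^ 2 + ‖deriv g s‖ ^ 2) ≤ ‖g y‖ ^ 2 := by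
  have hint : IntervalIntegrable (fun s => ‖g s‖ ^ 2 + ‖deriv g s‖ ^ 2) volume a b :=
    (continuous_norm_sq_add_norm_deriv_sq hg).intervalIntegrable _ _
  have mono {c d : ℝ} (hac : a ≤ c) (hcd : c ≤ d) (hdb : d ≤ b) :=
    intervalIntegral.integral_mono_interval hac hcd hdb (.of_forall fun s => by positivity) hint
  rcases le_total x y with hxy | hyx
  · linarith [neg_le_of_abs_le (abs_norm_sq_sub_norm_sq_le_integral hg hxy), mono hx.1 hxy hy.2]
  · linarith [le_of_abs_le (abs_norm_sq_sub_norm_sq_le_integral hg hyx), mono hy.1 hyx hx.2]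

theorem norm_sq_le_mul_integral_of_mem_Icc (hg : ContDiff ℝ 1 g) (hab : a < b) {x : ℝ}
    (hx : x ∈ Icc a b) :
    ‖g x‖ ^ 2 ≤ (1 + (b - a)⁻¹) * ∫ s in a..b, (‖g s‖ ^ 2 + ‖deriv g s‖ ^ 2) := by
  have hc := continuous_norm_sq_add_norm_deriv_sq hg
  set J := ∫ s in a..b, (‖g s‖ ^ 2 + ‖deriv g s‖ ^ 2)
  have average : (b - a) * (‖g x‖ ^ 2 - J) ≤ J := by
    rw [← smul_eq_mul, ← intervalIntegral.integral_const]
    refine intervalIntegral.integral_mono_on hab.le (by simp) (hc.intervalIntegrable _ _)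
      fun y hy => (norm_sq_sub_integral_le_norm_sq hg hx hy).trans ?_
    exact le_add_of_nonneg_right (by positivity)
  linarith [(le_inv_mul_iff₀ (sub_pos.2 hab)).2 average]

theorem norm_sq_le_integral_Ioi (hg : ContDiff ℝ 1 g) (hsupp : HasCompactSupport g) (a : ℝ) :
    ‖g a‖ ^ 2 ≤ ∫ s in Ioi a, (‖g s‖ ^ 2 + ‖deriv g s‖ ^ 2) := by
  have hsq : HasCompactSupport fun s => ‖g s‖ ^ 2 := hsupp.norm.comp_left (g := (· ^ 2)) (by simp)
  have hint : Integrable fun s => ‖g s‖ ^ 2 + ‖deriv g s‖ ^ 2 :=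
    (integrable_norm_sq hg.continuous hsupp).add
      (integrable_norm_sq (hg.continuous_deriv le_rfl) hsupp.deriv)
  calc ‖g a‖ ^ 2 = ‖∫ s in Ioi a, deriv (fun s => ‖g s‖ ^ 2) s‖ := by
        rw [hsq.integral_Ioi_deriv_eq (hg.norm_sq ℝ)]; simp
    _ ≤ ∫ s in Ioi a, (‖g s‖ ^ 2 + ‖deriv g s‖ ^ 2) :=
        norm_integral_le_of_norm_le hint.integrableOn
          (.of_forall fun s => abs_deriv_norm_sq_le (hg.differentiable one_ne_zero) s)

end Interval

section Plane

local notation "∂₁" => fieldDeriv (fun _ : ℝ × ℝ => ((1, 0) : ℝ × ℝ))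
local notation "∂₂" => fieldDeriv (fun _ : ℝ × ℝ => ((0, 1) : ℝ × ℝ))

theorem hasCompactSupport_comp_ray {α : Type*} [Zero α] {g : ℝ × ℝ → α}
    (hsupp : HasCompactSupport g) (s : ℝ) :
    HasCompactSupport fun r => g (polarCoord.symm (r, s)) := by
  have hdir : ((cos s, sin s) : ℝ × ℝ) ≠ 0 := fun h => by
    obtain ⟨hcos, hsin⟩ := Prod.mk_eq_zero.1 h
    simpa [hcos, hsin] using sin_sq_add_cos_sq s
  exact hsupp.comp_isClosedEmbedding (isClosedEmbedding_smul_left hdir)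

section NormedSpace

variable {F : Type*} [NormedAddCommGroup F] [NormedSpace ℝ F] {f P : ℝ × ℝ → F}

theorem deriv_comp_fst_section (hf : Differentiable ℝ f) (x y : ℝ) :
    deriv (fun s => f (s, y)) x = ∂₁ f (x, y) :=
  ((hf (x, y)).hasFDerivAt.comp_hasDerivAt x
    ((hasDerivAt_id x).prodMk (hasDerivAt_const x y))).deriv

theorem deriv_comp_snd_section (hf : Differentiable ℝ f) (x y : ℝ) :
    deriv (fun s => f (x, s)) y = ∂₂ f (x, y) :=
  ((hf (x, y)).hasFDerivAt.comp_hasDerivAt y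
    ((hasDerivAt_const y x).prodMk (hasDerivAt_id y))).deriv

/-- The squared Sobolev density `|P|² + |∂₂P|² + |∂₁P|² + |∂₂∂₁P|²` with dominating mixed
derivative, whose integral over a strip controls `P` pointwise. -/
def mixedDensity (P : ℝ × ℝ → F) : ℝ × ℝ → ℝ := fun p =>
  (‖P p‖ ^ 2 + ‖∂₂ P p‖ ^ 2) + (‖∂₁ P p‖ ^ 2 + ‖∂₂ (∂₁ P) p‖ ^ 2)

theorem mixedDensity_nonneg (P : ℝ × ℝ → F) (p : ℝ × ℝ) : 0 ≤ mixedDensity P p := by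
  unfold mixedDensity; positivity

theorem continuous_mixedDensity (hP : ContDiff ℝ 2 P) : Continuous (mixedDensity P) := by
  have h₁ : ContDiff ℝ 1 (∂₁ P) := contDiff_fieldDeriv contDiff_const hP (by norm_num)
  have h₂ : ContDiff ℝ 1 (∂₂ P) := contDiff_fieldDeriv contDiff_const hP (by norm_num)
  have h₁₂ : ContDiff ℝ 0 (∂₂ (∂₁ P)) := contDiff_fieldDeriv contDiff_const h₁ (by norm_num)
  have := hP.continuous
  have := h₁.continuous
  have := h₂.continuous
  have := h₁₂.continuous
  unfold mixedDensity
  fun_prop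

/-- The integrand `|f|² + |∂₁f|² + |∂₂f|²` of the squared `H¹(ℝ²)` norm. -/
def h1Density (f : ℝ × ℝ → F) : ℝ × ℝ → ℝ := fun q =>
  ‖f q‖ ^ 2 + ‖∂₁ f q‖ ^ 2 + ‖∂₂ f q‖ ^ 2

/-- The squared `H¹(ℝ²)` norm `‖f‖² + ‖∂₁f‖² + ‖∂₂f‖²`. -/
def h1NormSq (f : ℝ × ℝ → F) : ℝ := ∫ q, h1Density f q

theorem h1Density_nonneg (f : ℝ × ℝ → F) (q : ℝ × ℝ) : 0 ≤ h1Density f q := by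
  unfold h1Density; positivity

theorem integrable_norm_fieldDeriv_const_sq (hf : ContDiff ℝ 1 f) (hsupp : HasCompactSupport f)
    (v : ℝ × ℝ) : Integrable fun q => ‖fieldDeriv (fun _ => v) f q‖ ^ 2 :=
  integrable_norm_sq (contDiff_fieldDeriv (m := 0) contDiff_const hf (by norm_num)).continuous
    (hasCompactSupport_fieldDeriv hsupp _)

theorem integrable_h1Density (hf : ContDiff ℝ 1 f) (hsupp : HasCompactSupport f) :
    Integrable (h1Density f) :=
  ((integrable_norm_sq hf.continuous hsupp).add
    (integrable_norm_fieldDeriv_const_sq hf hsupp (1, 0))).add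
    (integrable_norm_fieldDeriv_const_sq hf hsupp (0, 1))

theorem h1NormSq_eq_integral_add (hf : ContDiff ℝ 1 f) (hsupp : HasCompactSupport f) :
    h1NormSq f = (∫ q, ‖f q‖ ^ 2) + (∫ q, ‖∂₁ f q‖ ^ 2) + ∫ q, ‖∂₂ f q‖ ^ 2 := by
  have h₀ := integrable_norm_sq (μ := volume) hf.continuous hsupp
  have h₁ := integrable_norm_fieldDeriv_const_sq hf hsupp (1, 0)
  have h₂ := integrable_norm_fieldDeriv_const_sq hf hsupp (0, 1)
  exact (integral_add' (h₀.add h₁) h₂).trans (by rw [integral_add' h₀ h₁])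

/-- The rotation vector field `x₁∂₂ - x₂∂₁` on the plane. -/
def rotField : ℝ × ℝ → ℝ × ℝ := fun q => (-q.2, q.1)

theorem contDiff_rotField {n : WithTop ℕ∞} : ContDiff ℝ n rotField := by
  unfold rotField; fun_prop

theorem contDiff_polarCoord_symm {n : WithTop ℕ∞} : ContDiff ℝ n polarCoord.symm := by
  have : ⇑polarCoord.symm = fun p : ℝ × ℝ => (p.1 * cos p.2, p.1 * sin p.2) := rfl
  rw [this]; fun_prop

theorem fderiv_polarCoord_symm_fst (p : ℝ × ℝ) :
    fderiv ℝ polarCoord.symm p (1, 0) = (cos p.2, sin p.2) := by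
  simp [(hasFDerivAt_polarCoord_symm p).fderiv, fderivPolarCoordSymm,
    Matrix.toLin_finTwoProd_toContinuousLinearMap]

theorem fderiv_polarCoord_symm_snd (p : ℝ × ℝ) :
    fderiv ℝ polarCoord.symm p (0, 1) = rotField (polarCoord.symm p) := by
  simp [(hasFDerivAt_polarCoord_symm p).fderiv, fderivPolarCoordSymm, rotField,
    Matrix.toLin_finTwoProd_toContinuousLinearMap]

theorem snd_partial_comp_polarCoord_symm (hf : Differentiable ℝ f) :
    ∂₂ (f ∘ polarCoord.symm) = fieldDeriv rotField f ∘ polarCoord.symm :=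
  fieldDeriv_comp hf ((contDiff_polarCoord_symm (n := 1)).differentiable one_ne_zero)
    fderiv_polarCoord_symm_snd

theorem norm_cos_smul_add_sin_smul_sq_le (s : ℝ) (u v : F) :
    ‖cos s • u + sin s • v‖ ^ 2 ≤ ‖u‖ ^ 2 + ‖v‖ ^ 2 := by
  have htri : ‖cos s • u + sin s • v‖ ≤ |cos s| * ‖u‖ + |sin s| * ‖v‖ := by
    simpa only [norm_smul, norm_eq_abs] using norm_add_le (cos s • u) (sin s • v)
  have hunit : |cos s| ^ 2 + |sin s| ^ 2 = 1 := by simp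
  calc ‖cos s • u + sin s • v‖ ^ 2 ≤ (|cos s| * ‖u‖ + |sin s| * ‖v‖) ^ 2 := by gcongr
    _ ≤ (|cos s| ^ 2 + |sin s| ^ 2) * (‖u‖ ^ 2 + ‖v‖ ^ 2) := by
        linarith [sq_nonneg (|cos s| * ‖v‖ - |sin s| * ‖u‖)]
    _ = ‖u‖ ^ 2 + ‖v‖ ^ 2 := by rw [hunit, one_mul]

theorem norm_fst_partial_comp_polarCoord_symm_sq_le (hf : Differentiable ℝ f) (p : ℝ × ℝ) :
    ‖∂₁ (f ∘ polarCoord.symm) p‖ ^ 2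
      ≤ ‖∂₁ f (polarCoord.symm p)‖ ^ 2 + ‖∂₂ f (polarCoord.symm p)‖ ^ 2 := by
  have hradial : ∂₁ (f ∘ polarCoord.symm) p
      = cos p.2 • ∂₁ f (polarCoord.symm p) + sin p.2 • ∂₂ f (polarCoord.symm p) := by
    have hdir : (cos p.2, sin p.2) = cos p.2 • ((1, 0) : ℝ × ℝ) + sin p.2 • (0, 1) := by simp
    simp only [fieldDeriv]
    rw [fderiv_comp p (hf _) (hasFDerivAt_polarCoord_symm p).differentiableAt,
      ContinuousLinearMap.comp_apply, fderiv_polarCoord_symm_fst, hdir, map_add,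
      map_smul, map_smul]
  rw [hradial]
  exact norm_cos_smul_add_sin_smul_sq_le _ _ _

theorem mixedDensity_comp_polarCoord_symm_le (hf : ContDiff ℝ 2 f) (p : ℝ × ℝ) :
    mixedDensity (f ∘ polarCoord.symm) p
      ≤ h1Density f (polarCoord.symm p)
        + h1Density (fieldDeriv rotField f) (polarCoord.symm p) := by
  have hd : Differentiable ℝ f := hf.differentiable two_ne_zero
  have hrot : Differentiable ℝ (fieldDeriv rotField f) :=
    (contDiff_fieldDeriv (m := 1) contDiff_rotField hf (by norm_num)).differentiable one_ne_zero
  have hswap : ∂₂ (∂₁ (f ∘ polarCoord.symm)) = ∂₁ (fieldDeriv rotField f ∘ polarCoord.symm) := by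
    rw [fieldDeriv_comm (by fun_prop) (by fun_prop) (hf.comp contDiff_polarCoord_symm),
      snd_partial_comp_polarCoord_symm hd]
    funext q
    simp [VectorField.lieBracket_eq, fieldDeriv]
  have h₁ := norm_fst_partial_comp_polarCoord_symm_sq_le hd p
  have h₂ := norm_fst_partial_comp_polarCoord_symm_sq_le hrot p
  simp only [mixedDensity, h1Density, hswap, snd_partial_comp_polarCoord_symm hd,
    Function.comp_apply] at h₁ h₂ ⊢
  linarith

theorem integrableOn_smul_comp_polarCoord_symm (hf : Integrable f) :
    IntegrableOn (fun p => p.1 • f (polarCoord.symm p)) polarCoord.target := by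
  have hmeas := polarCoord.open_target.measurableSet
  have himage : IntegrableOn f (polarCoord.symm '' polarCoord.target) := hf.integrableOn
  rw [integrableOn_image_iff_integrableOn_abs_det_fderiv_smul volume hmeas
    (fun p _ => (hasFDerivAt_polarCoord_symm p).hasFDerivWithinAt) polarCoord.symm.injOn] at himage
  refine himage.congr_fun (fun p hp => ?_) hmeas
  have hp : 0 < p.1 := hp.1
  simp only [det_fderivPolarCoordSymm, abs_of_pos hp]

theorem setIntegral_smul_comp_polarCoord_symm_le {g : ℝ × ℝ → ℝ} (hg : Integrable g)
    (hg0 : 0 ≤ g) {S : Set (ℝ × ℝ)} (hS : S ⊆ polarCoord.target) :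
    ∫ p in S, p.1 • g (polarCoord.symm p) ≤ ∫ q, g q := by
  rw [← integral_comp_polarCoord_symm]
  refine setIntegral_mono_set (integrableOn_smul_comp_polarCoord_symm hg) ?_ hS.eventuallyLE
  exact ae_restrict_of_forall_mem polarCoord.open_target.measurableSet fun p hp =>
    smul_nonneg (le_of_lt hp.1) (hg0 _)

theorem exists_polar (x y : ℝ) : ∃ s ∈ Icc (-π) π, polarCoord.symm (rad x y, s) = (x, y) := by
  have hr : rad x y = ‖(⟨x, y⟩ : ℂ)‖ := by rw [Complex.norm_def, Complex.normSq_mk, rad]; ring_nf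
  refine ⟨Complex.arg ⟨x, y⟩, Ioc_subset_Icc_self (Complex.arg_mem_Ioc _), ?_⟩
  rw [polarCoord_symm_apply, hr, Complex.norm_mul_cos_arg, Complex.norm_mul_sin_arg]

end NormedSpace

section InnerProductSpace

variable {F : Type*} [NormedAddCommGroup F] [InnerProductSpace ℝ F] {f P : ℝ × ℝ → F}

theorem norm_sq_le_mul_integral_snd (hf : ContDiff ℝ 1 f) {c d : ℝ} (hcd : c < d) (x : ℝ) {y : ℝ}
    (hy : y ∈ Icc c d) :
    ‖f (x, y)‖ ^ 2 ≤ (1 + (d - c)⁻¹) * ∫ s in c..d, (‖f (x, s)‖ ^ 2 + ‖∂₂ f (x, s)‖ ^ 2) := by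
  simpa only [deriv_comp_snd_section (hf.differentiable one_ne_zero)] using
    norm_sq_le_mul_integral_of_mem_Icc (g := fun s => f (x, s))
      (hf.comp (contDiff_prodMk_right x)) hcd hy

theorem norm_sq_add_norm_partial_sq_le_integral_mixedDensity (hP : ContDiff ℝ 2 P) {c d : ℝ}
    (hcd : c < d) (x : ℝ) {y : ℝ} (hy : y ∈ Icc c d) :
    ‖P (x, y)‖ ^ 2 + ‖∂₁ P (x, y)‖ ^ 2
      ≤ (1 + (d - c)⁻¹) * ∫ s in Ioo c d, mixedDensity P (x, s) := by
  have h₀ : ContDiff ℝ 1 P := hP.of_le (by norm_num)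
  have h₁ : ContDiff ℝ 1 (∂₁ P) := contDiff_fieldDeriv contDiff_const hP (by norm_num)
  have hint {g : ℝ × ℝ → F} (hg : ContDiff ℝ 1 g) : IntervalIntegrable
      (fun s => ‖g (x, s)‖ ^ 2 + ‖∂₂ g (x, s)‖ ^ 2) volume c d := by
    have := hg.continuous
    have := (contDiff_fieldDeriv (m := 0) (V := fun _ => (0, 1)) contDiff_const hg
      (by norm_num)).continuous
    exact Continuous.intervalIntegrable (by fun_prop) _ _
  rw [← integral_Ioc_eq_integral_Ioo, ← intervalIntegral.integral_of_le hcd.le]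
  unfold mixedDensity
  rw [intervalIntegral.integral_add (hint h₀) (hint h₁), mul_add]
  exact add_le_add (norm_sq_le_mul_integral_snd h₀ hcd x hy)
    (norm_sq_le_mul_integral_snd h₁ hcd x hy)

theorem norm_sq_le_mul_integral_strip (hP : ContDiff ℝ 2 P) {x y c d : ℝ}
    (hsupp : HasCompactSupport fun s => P (s, y)) (hcd : c < d) (hy : y ∈ Icc c d)
    (hint : IntegrableOn (mixedDensity P) (Ioi x ×ˢ Ioo c d)) :
    ‖P (x, y)‖ ^ 2 ≤ (1 + (d - c)⁻¹) * ∫ p in Ioi x ×ˢ Ioo c d, mixedDensity P p := by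
  have hP₁ : ContDiff ℝ 1 P := hP.of_le (by norm_num)
  rw [IntegrableOn, Measure.volume_eq_prod, ← Measure.prod_restrict] at hint
  calc ‖P (x, y)‖ ^ 2 ≤ ∫ s in Ioi x, (‖P (s, y)‖ ^ 2 + ‖∂₁ P (s, y)‖ ^ 2) := by
        simpa only [deriv_comp_fst_section (hP₁.differentiable one_ne_zero)] using
          norm_sq_le_integral_Ioi (g := fun s => P (s, y))
            (hP₁.comp (contDiff_prodMk_left y)) hsupp x
    _ ≤ ∫ s in Ioi x, (1 + (d - c)⁻¹) * ∫ u in Ioo c d, mixedDensity P (s, u) :=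
        integral_mono_of_nonneg (.of_forall fun s => by positivity)
          (hint.integral_prod_left.const_mul _)
          (.of_forall fun s =>
            norm_sq_add_norm_partial_sq_le_integral_mixedDensity hP hcd s hy)
    _ = (1 + (d - c)⁻¹) * ∫ p in Ioi x ×ˢ Ioo c d, mixedDensity P p := by
        rw [integral_const_mul, Measure.volume_eq_prod, ← Measure.prod_restrict,
          integral_prod _ hint]

theorem norm_sq_le_mul_integral_strip_of_le (hP : ContDiff ℝ 2 P) {x y c d : ℝ}
    (hsupp : HasCompactSupport fun s => P (s, y)) (hcd : c < d) (hy : y ∈ Icc c d)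
    {G : ℝ × ℝ → ℝ} (hG : IntegrableOn G (Ioi x ×ˢ Ioo c d))
    (hle : ∀ p ∈ Ioi x ×ˢ Ioo c d, mixedDensity P p ≤ G p) :
    ‖P (x, y)‖ ^ 2 ≤ (1 + (d - c)⁻¹) * ∫ p in Ioi x ×ˢ Ioo c d, G p := by
  have hmeas : MeasurableSet (Ioi x ×ˢ Ioo c d) := measurableSet_Ioi.prod measurableSet_Ioo
  have hint : IntegrableOn (mixedDensity P) (Ioi x ×ˢ Ioo c d) :=
    hG.mono' (continuous_mixedDensity hP).aestronglyMeasurable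
      (ae_restrict_of_forall_mem hmeas fun p hp => by
        simpa only [norm_of_nonneg (mixedDensity_nonneg P p)] using hle p hp)
  have hK : 0 ≤ 1 + (d - c)⁻¹ := by have := sub_pos.2 hcd; positivity
  exact (norm_sq_le_mul_integral_strip hP hsupp hcd hy hint).trans
    (mul_le_mul_of_nonneg_left (setIntegral_mono_on hint hG hmeas hle) hK)

theorem norm_sq_le_h1NormSq_add (hf : ContDiff ℝ 2 f) (hsupp : HasCompactSupport f) (q : ℝ × ℝ) :
    ‖f q‖ ^ 2 ≤ 2 * (h1NormSq f + h1NormSq (∂₁ f)) := by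
  have hi := integrable_h1Density (hf.of_le (by norm_num)) hsupp
  have hi₁ := integrable_h1Density (contDiff_fieldDeriv (V := fun _ => (1, 0)) contDiff_const hf
    (by norm_num)) (hasCompactSupport_fieldDeriv hsupp _)
  have hsection : HasCompactSupport fun s => f (s, q.2) :=
    hsupp.comp_isClosedEmbedding (g := fun s => (s, q.2))
      (Function.LeftInverse.isClosedEmbedding (f := Prod.fst) (fun _ => rfl) continuous_fst
        (by fun_prop))
  calc ‖f q‖ ^ 2
      ≤ (1 + (q.2 + 1 - q.2)⁻¹) * ∫ p in Ioi q.1 ×ˢ Ioo q.2 (q.2 + 1),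
          (h1Density f p + h1Density (∂₁ f) p) :=
        norm_sq_le_mul_integral_strip_of_le hf hsection (by linarith) (by simp)
          (hi.add hi₁).integrableOn
          fun p _ => by
            unfold mixedDensity h1Density
            linarith [sq_nonneg ‖∂₁ f p‖, sq_nonneg ‖∂₁ (∂₁ f) p‖]
    _ ≤ (1 + (q.2 + 1 - q.2)⁻¹) * ∫ p, (h1Density f p + h1Density (∂₁ f) p) := by
        refine mul_le_mul_of_nonneg_left (setIntegral_le_integral (hi.add hi₁) ?_) (by simp)
        exact .of_forall fun p => add_nonneg (h1Density_nonneg f p) (h1Density_nonneg _ p)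
    _ = 2 * (h1NormSq f + h1NormSq (∂₁ f)) := by
        rw [integral_add hi hi₁, h1NormSq, h1NormSq]
        norm_num

theorem mul_norm_sq_polar_le (hf : ContDiff ℝ 2 f) (hsupp : HasCompactSupport f) {R s : ℝ}
    (hR : 0 < R) (hs : s ∈ Icc (-π) π) :
    R * ‖f (polarCoord.symm (R, s))‖ ^ 2
      ≤ 2 * (h1NormSq f + h1NormSq (fieldDeriv rotField f)) := by
  set G : ℝ × ℝ → ℝ := h1Density f + h1Density (fieldDeriv rotField f) with hGdef
  have hi := integrable_h1Density (hf.of_le (by norm_num)) hsupp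
  have hi' := integrable_h1Density (contDiff_fieldDeriv contDiff_rotField hf (by norm_num))
    (hasCompactSupport_fieldDeriv hsupp _)
  have hG : Integrable G := hi.add hi'
  have hG0 : 0 ≤ G := add_nonneg (h1Density_nonneg f) (h1Density_nonneg _)
  have hstrip : Ioi R ×ˢ Ioo (-π) π ⊆ polarCoord.target :=
    prod_mono (Ioi_subset_Ioi hR.le) subset_rfl
  have hint := (integrableOn_smul_comp_polarCoord_symm hG).mono_set hstrip
  have hconst : 1 + (π - -π)⁻¹ ≤ 2 := by
    have : (π - -π)⁻¹ ≤ 1 := inv_le_one_of_one_le₀ (by linarith [pi_gt_three])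
    linarith
  calc R * ‖f (polarCoord.symm (R, s))‖ ^ 2
      ≤ R * ((1 + (π - -π)⁻¹) * ∫ p in Ioi R ×ˢ Ioo (-π) π,
          R⁻¹ * p.1 • G (polarCoord.symm p)) := by
        refine mul_le_mul_of_nonneg_left (norm_sq_le_mul_integral_strip_of_le
          (hf.comp contDiff_polarCoord_symm) (hasCompactSupport_comp_ray hsupp s)
          (by linarith [pi_pos]) hs (hint.const_mul _) fun p hp => ?_) hR.le
        refine (mixedDensity_comp_polarCoord_symm_le hf p).trans ?_
        rw [smul_eq_mul, ← mul_assoc]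
        exact le_mul_of_one_le_left (hG0 _) ((one_le_inv_mul₀ hR).2 (le_of_lt hp.1))
    _ = (1 + (π - -π)⁻¹) * ∫ p in Ioi R ×ˢ Ioo (-π) π, p.1 • G (polarCoord.symm p) := by
        rw [integral_const_mul]; field_simp
    _ ≤ 2 * ∫ q, G q := by
        have hK : 0 ≤ 1 + (π - -π)⁻¹ := by rw [sub_neg_eq_add]; positivity
        exact mul_le_mul_of_nonneg hconst (setIntegral_smul_comp_polarCoord_symm_le hG hG0 hstrip)
          hK (integral_nonneg hG0)
    _ = 2 * (h1NormSq f + h1NormSq (fieldDeriv rotField f)) := by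
        rw [hGdef, integral_add' hi hi', h1NormSq, h1NormSq]

theorem one_add_rad_mul_norm_sq_le (hf : ContDiff ℝ 2 f) (hsupp : HasCompactSupport f) (x y : ℝ) :
    (1 + rad x y) * ‖f (x, y)‖ ^ 2
      ≤ 2 * (2 * h1NormSq f + h1NormSq (∂₁ f) + h1NormSq (fieldDeriv rotField f)) := by
  have hplane := norm_sq_le_h1NormSq_add hf hsupp (x, y)
  have hradial : rad x y * ‖f (x, y)‖ ^ 2
      ≤ 2 * (h1NormSq f + h1NormSq (fieldDeriv rotField f)) := by
    have hrad : 0 ≤ rad x y := sqrt_nonneg _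
    rcases hrad.eq_or_lt with h0 | hpos
    · have h1NormSq_nonneg (g : ℝ × ℝ → F) : 0 ≤ h1NormSq g :=
        integral_nonneg (h1Density_nonneg g)
      rw [← h0, zero_mul]
      linarith [h1NormSq_nonneg f, h1NormSq_nonneg (fieldDeriv rotField f)]
    · obtain ⟨s, hs, hxy⟩ := exists_polar x y
      simpa only [hxy] using mul_norm_sq_polar_le hf hsupp hpos hs
  linarith

end InnerProductSpace

end Plane

section Spacetime

variable {f g : F3}

/-- A function of `(t, x, y)` as a function on `ℝ × ℝ × ℝ`, on which the vector fields act through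
`fieldDeriv`. -/
def uncurry3 (f : F3) : ℝ × ℝ × ℝ → ℝ := fun p => f p.1 p.2.1 p.2.2

theorem uncurry3_injective : Function.Injective uncurry3 := fun _ _ h => by
  funext t x y
  exact congrFun h (t, x, y)

/-- The coefficients of the vector fields `Γ = (∂_t, ∂₁, ∂₂, X)`. -/
def gammaField : Fin 4 → ℝ × ℝ × ℝ → ℝ × ℝ × ℝ :=
  ![fun _ => (1, 0, 0), fun _ => (0, 1, 0), fun _ => (0, 0, 1), id]

/-- The coefficients of the rotation field `Ω = x₁∂₂ - x₂∂₁` on spacetime. -/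
def omField : ℝ × ℝ × ℝ → ℝ × ℝ × ℝ := fun p => (0, -p.2.2, p.2.1)

theorem contDiff_gammaField {n : WithTop ℕ∞} (a : Fin 4) : ContDiff ℝ n (gammaField a) := by
  fin_cases a
  exacts [contDiff_const, contDiff_const, contDiff_const, contDiff_id]

theorem contDiff_omField {n : WithTop ℕ∞} : ContDiff ℝ n omField := by
  unfold omField; fun_prop

theorem pt_eq_fderiv (hf : Differentiable ℝ (uncurry3 f)) (t x y : ℝ) :
    pt f t x y = fderiv ℝ (uncurry3 f) (t, x, y) (1, 0, 0) :=
  (HasFDerivAt.comp_hasDerivAt (l := uncurry3 f) t (hf (t, x, y)).hasFDerivAt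
    ((hasDerivAt_id t).prodMk (hasDerivAt_const t (x, y)))).deriv

theorem px_eq_fderiv (hf : Differentiable ℝ (uncurry3 f)) (t x y : ℝ) :
    px f t x y = fderiv ℝ (uncurry3 f) (t, x, y) (0, 1, 0) :=
  (HasFDerivAt.comp_hasDerivAt (l := uncurry3 f) x (hf (t, x, y)).hasFDerivAt
    ((hasDerivAt_const x t).prodMk ((hasDerivAt_id x).prodMk (hasDerivAt_const x y)))).deriv

theorem py_eq_fderiv (hf : Differentiable ℝ (uncurry3 f)) (t x y : ℝ) :
    py f t x y = fderiv ℝ (uncurry3 f) (t, x, y) (0, 0, 1) :=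
  (HasFDerivAt.comp_hasDerivAt (l := uncurry3 f) y (hf (t, x, y)).hasFDerivAt
    ((hasDerivAt_const y t).prodMk ((hasDerivAt_const y x).prodMk (hasDerivAt_id y)))).deriv

theorem fderiv_uncurry3_apply (hf : Differentiable ℝ (uncurry3 f)) (t x y a b c : ℝ) :
    fderiv ℝ (uncurry3 f) (t, x, y) (a, b, c)
      = a * pt f t x y + b * px f t x y + c * py f t x y := by
  have hv : ((a, b, c) : ℝ × ℝ × ℝ) = a • (1, 0, 0) + b • (0, 1, 0) + c • (0, 0, 1) := by simp
  rw [pt_eq_fderiv hf, px_eq_fderiv hf, py_eq_fderiv hf, hv]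
  simp only [map_add, map_smul, smul_eq_mul]

theorem uncurry3_GammaF (hf : Differentiable ℝ (uncurry3 f)) (a : Fin 4) :
    uncurry3 (GammaF a f) = fieldDeriv (gammaField a) (uncurry3 f) := by
  funext ⟨t, x, y⟩
  fin_cases a <;>
    simp [uncurry3, GammaF, gammaField, fieldDeriv, Xf, fderiv_uncurry3_apply hf]

theorem uncurry3_Om (hf : Differentiable ℝ (uncurry3 f)) :
    uncurry3 (Om f) = fieldDeriv omField (uncurry3 f) := by
  funext ⟨t, x, y⟩
  simp only [uncurry3, Om, omField, fieldDeriv, fderiv_uncurry3_apply hf]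
  ring

theorem smooth3_iff_contDiff_uncurry3 : Smooth3 f ↔ ContDiff ℝ (⊤ : ℕ∞) (uncurry3 f) := Iff.rfl

theorem Smooth3.contDiff {n : ℕ} (hf : Smooth3 f) : ContDiff ℝ n (uncurry3 f) :=
  ContDiff.of_le hf (by exact_mod_cast le_top)

theorem Smooth3.differentiable (hf : Smooth3 f) : Differentiable ℝ (uncurry3 f) :=
  ContDiff.differentiable (n := 1) hf.contDiff one_ne_zero

theorem Smooth3.GammaF (hf : Smooth3 f) (a : Fin 4) : Smooth3 (GammaF a f) := by
  rw [smooth3_iff_contDiff_uncurry3, uncurry3_GammaF hf.differentiable]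
  exact contDiff_fieldDeriv (contDiff_gammaField a) hf (by simp)

theorem Smooth3.Om (hf : Smooth3 f) : Smooth3 (Om f) := by
  rw [smooth3_iff_contDiff_uncurry3, uncurry3_Om hf.differentiable]
  exact contDiff_fieldDeriv contDiff_omField hf (by simp)

theorem Smooth3.GIter (hf : Smooth3 f) : ∀ γ : List (Fin 4), Smooth3 (GIter γ f)
  | [] => hf
  | a :: γ => (hf.GIter γ).GammaF a

theorem Smooth3.add (hf : Smooth3 f) (hg : Smooth3 g) : Smooth3 (f + g) :=
  ContDiff.add hf hg

theorem Smooth3.const_smul (hf : Smooth3 f) (c : ℝ) : Smooth3 (c • f) :=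
  ContDiff.const_smul c hf

theorem GammaF_add (hf : Smooth3 f) (hg : Smooth3 g) (a : Fin 4) :
    GammaF a (f + g) = GammaF a f + GammaF a g := by
  refine uncurry3_injective ?_
  have hadd (u v : F3) : uncurry3 (u + v) = uncurry3 u + uncurry3 v := rfl
  rw [hadd, uncurry3_GammaF (hf.add hg).differentiable, hadd,
    fieldDeriv_add _ hf.differentiable hg.differentiable, uncurry3_GammaF hf.differentiable,
    uncurry3_GammaF hg.differentiable]

theorem GammaF_const_smul (hf : Smooth3 f) (c : ℝ) (a : Fin 4) :
    GammaF a (c • f) = c • GammaF a f := by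
  refine uncurry3_injective ?_
  have hsmul (u : F3) : uncurry3 (c • u) = c • uncurry3 u := rfl
  rw [uncurry3_GammaF (hf.const_smul c).differentiable, hsmul, hsmul, fieldDeriv_const_smul,
    uncurry3_GammaF hf.differentiable]

theorem GIter_add (hf : Smooth3 f) (hg : Smooth3 g) (γ : List (Fin 4)) :
    GIter γ (f + g) = GIter γ f + GIter γ g := by
  induction γ with
  | nil => rfl
  | cons a γ ih => simp only [GIter, ih, GammaF_add (hf.GIter γ) (hg.GIter γ)]

theorem GIter_const_smul (hf : Smooth3 f) (c : ℝ) (γ : List (Fin 4)) :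
    GIter γ (c • f) = c • GIter γ f := by
  induction γ with
  | nil => rfl
  | cons a γ ih => simp only [GIter, ih, GammaF_const_smul (hf.GIter γ)]

theorem GIter_append (β γ : List (Fin 4)) (f : F3) :
    GIter (β ++ γ) f = GIter β (GIter γ f) := by
  induction β with
  | nil => rfl
  | cons a β ih => simp only [List.cons_append, GIter, ih]

theorem exists_lieBracket_omField_gammaField (a : Fin 4) :
    ∃ c : ℝ, |c| ≤ 1 ∧ ∃ b : Fin 4,
      VectorField.lieBracket ℝ omField (gammaField a) = c • gammaField b := by
  have hom (p v : ℝ × ℝ × ℝ) : fderiv ℝ omField p v = omField v := by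
    have hlin : IsLinearMap ℝ omField :=
      ⟨fun p q => by simp [omField, add_comm], fun c p => by simp [omField]⟩
    exact DFunLike.congr_fun (hlin.mk' omField).toContinuousLinearMap.hasFDerivAt.fderiv v
  fin_cases a
  · exact ⟨0, by simp, 0, by funext p; simp [VectorField.lieBracket_eq, hom, gammaField, omField]⟩
  · exact ⟨-1, by simp, 2, by funext p; simp [VectorField.lieBracket_eq, hom, gammaField, omField]⟩
  · exact ⟨1, by simp, 1, by funext p; simp [VectorField.lieBracket_eq, hom, gammaField, omField]⟩
  · exact ⟨0, by simp, 3, by funext p; simp [VectorField.lieBracket_eq, hom, gammaField]⟩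

theorem exists_Om_GammaF_eq (hf : Smooth3 f) (a : Fin 4) :
    ∃ c : ℝ, |c| ≤ 1 ∧ ∃ b : Fin 4, Om (GammaF a f) = GammaF a (Om f) + c • GammaF b f := by
  obtain ⟨c, hc, b, hbracket⟩ := exists_lieBracket_omField_gammaField a
  refine ⟨c, hc, b, uncurry3_injective ?_⟩
  have hadd (u v : F3) : uncurry3 (u + c • v) = uncurry3 u + c • uncurry3 v := rfl
  rw [hadd, uncurry3_Om (hf.GammaF a).differentiable, uncurry3_GammaF hf.differentiable,
    uncurry3_GammaF hf.Om.differentiable, uncurry3_GammaF hf.differentiable,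
    uncurry3_Om hf.differentiable, ← fieldDeriv_const_smul_field, ← hbracket]
  exact fieldDeriv_comm ((contDiff_omField (n := 1)).differentiable one_ne_zero)
    ((contDiff_gammaField (n := 1) a).differentiable one_ne_zero) hf.contDiff

/-- The function `f(t, ·)` on the plane. -/
def timeSlice (t : ℝ) (f : F3) : ℝ × ℝ → ℝ := fun q => f t q.1 q.2

theorem Smooth3.contDiff_timeSlice {n : ℕ} (hf : Smooth3 f) (t : ℝ) :
    ContDiff ℝ n (timeSlice t f) :=
  hf.contDiff.comp (contDiff_prodMk_right t)

theorem Smooth3.continuous_timeSlice (hf : Smooth3 f) (t : ℝ) : Continuous (timeSlice t f) :=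
  (hf.contDiff_timeSlice (n := 0) t).continuous

theorem Smooth3.differentiable_timeSlice (hf : Smooth3 f) (t : ℝ) :
    Differentiable ℝ (timeSlice t f) :=
  ContDiff.differentiable (n := 1) (hf.contDiff_timeSlice t) one_ne_zero

theorem fieldDeriv_fst_timeSlice (hf : Smooth3 f) (t : ℝ) :
    fieldDeriv (fun _ => (1, 0)) (timeSlice t f) = timeSlice t (px f) :=
  funext fun q => (deriv_comp_fst_section (hf.differentiable_timeSlice t) q.1 q.2).symm

theorem fieldDeriv_snd_timeSlice (hf : Smooth3 f) (t : ℝ) :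
    fieldDeriv (fun _ => (0, 1)) (timeSlice t f) = timeSlice t (py f) :=
  funext fun q => (deriv_comp_snd_section (hf.differentiable_timeSlice t) q.1 q.2).symm

theorem fieldDeriv_rotField_timeSlice (hf : Smooth3 f) (t : ℝ) :
    fieldDeriv rotField (timeSlice t f) = timeSlice t (Om f) := by
  funext q
  have hrot : rotField q = q.1 • (0, 1) - q.2 • (1, 0) := by simp [rotField]
  have hx := congrFun (fieldDeriv_fst_timeSlice hf t) q
  have hy := congrFun (fieldDeriv_snd_timeSlice hf t) q
  simp only [fieldDeriv] at hx hy ⊢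
  rw [hrot, map_sub, map_smul, map_smul, hx, hy]
  rfl

theorem Om_eq_deriv_rotation (hf : Smooth3 f) (t x y : ℝ) :
    Om f t x y = deriv (fun s => f t (x * cos s - y * sin s) (x * sin s + y * cos s)) 0 := by
  have hcurve : HasDerivAt (fun s => (x * cos s - y * sin s, x * sin s + y * cos s))
      (rotField (x, y)) 0 := by
    have h₁ := ((hasDerivAt_cos 0).const_mul x).sub ((hasDerivAt_sin 0).const_mul y)
    have h₂ := ((hasDerivAt_sin 0).const_mul x).add ((hasDerivAt_cos 0).const_mul y)
    simpa [rotField] using h₁.prodMk h₂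
  have hslice : HasFDerivAt (timeSlice t f) (fderiv ℝ (timeSlice t f) (x, y))
      (x * cos 0 - y * sin 0, x * sin 0 + y * cos 0) := by
    simpa using (hf.differentiable_timeSlice t (x, y)).hasFDerivAt
  exact (congrFun (fieldDeriv_rotField_timeSlice hf t) (x, y)).symm.trans
    (hslice.comp_hasDerivAt 0 hcurve).deriv.symm

theorem rad_rotation (x y s : ℝ) :
    rad (x * cos s - y * sin s) (x * sin s + y * cos s) = rad x y := by
  unfold rad
  congr 1
  linear_combination (x ^ 2 + y ^ 2) * sin_sq_add_cos_sq s

theorem Om_eq_zero_of_radialF (hf : Smooth3 f) (hr : RadialF f) : Om f = 0 := by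
  funext t x y
  simp only [Om_eq_deriv_rotation hf, hr t _ _ x y (rad_rotation x y _), deriv_const,
    Pi.zero_apply]

theorem rad_ne_zero {x y : ℝ} (h : (x, y) ≠ 0) : rad x y ≠ 0 := by
  rw [rad, Real.sqrt_ne_zero (by positivity)]
  refine fun h0 => h ?_
  simpa [pow_eq_zero_iff] using (add_eq_zero_iff_of_nonneg (sq_nonneg x) (sq_nonneg y)).1 h0

theorem eq_of_eq_off_origin (hf : Smooth3 f) (hg : Smooth3 g)
    (h : ∀ t x y, rad x y ≠ 0 → f t x y = g t x y) : f = g := by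
  funext t x y
  refine congrFun (Continuous.ext_on (dense_compl_singleton (0 : ℝ × ℝ))
    (hf.continuous_timeSlice t) (hg.continuous_timeSlice t) ?_) (x, y)
  exact fun q hq => h t q.1 q.2 (rad_ne_zero hq)

theorem Om_radial_vectorField {w₁ w₂ : F3} (h₁ : Smooth3 w₁) (h₂ : Smooth3 w₂) {W : ℝ → ℝ → ℝ}
    (hW : ∀ t x y, rad x y ≠ 0 →
      w₁ t x y = W t (rad x y) * x / rad x y ∧ w₂ t x y = W t (rad x y) * y / rad x y) :
    Om w₁ = (-1 : ℝ) • w₂ ∧ Om w₂ = (1 : ℝ) • w₁ := by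
  have rotated {t x y : ℝ} (h : rad x y ≠ 0) (s : ℝ) :
      w₁ t (x * cos s - y * sin s) (x * sin s + y * cos s)
          = w₁ t x y * cos s - w₂ t x y * sin s ∧
        w₂ t (x * cos s - y * sin s) (x * sin s + y * cos s)
          = w₁ t x y * sin s + w₂ t x y * cos s := by
    have hs := hW t (x * cos s - y * sin s) (x * sin s + y * cos s) (by rwa [rad_rotation])
    rw [rad_rotation] at hs
    rw [hs.1, hs.2, (hW t x y h).1, (hW t x y h).2]
    constructor <;> ring
  refine ⟨eq_of_eq_off_origin h₁.Om (h₂.const_smul _) fun t x y h => ?_,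
    eq_of_eq_off_origin h₂.Om (h₁.const_smul _) fun t x y h => ?_⟩
  · simp [Om_eq_deriv_rotation h₁, rotated h]
  · simp [Om_eq_deriv_rotation h₂, rotated h]

end Spacetime

section Energy

theorem integral_norm_sq_eq_toReal_eLpNorm_sq {X G : Type*} [MeasurableSpace X] {μ : Measure X}
    [NormedAddCommGroup G] {f : X → G} (hf : AEStronglyMeasurable f μ) :
    ∫ x, ‖f x‖ ^ 2 ∂μ = (eLpNorm f 2 μ).toReal ^ 2 := by
  rw [toReal_eLpNorm hf, lpNorm_eq_integral_norm_rpow_toReal two_ne_zero ENNReal.ofNat_ne_top hf]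
  have h0 : 0 ≤ ∫ x, ‖f x‖ ^ 2 ∂μ := integral_nonneg fun x => by positivity
  simp only [ENNReal.toReal_ofNat, rpow_ofNat]
  rw [← one_div, ← sqrt_eq_rpow, sq_sqrt h0]

theorem L2n_timeSlice {f : F3} (hf : Smooth3 f) (t : ℝ) :
    (L2n fun x y => f t x y) = (eLpNorm (timeSlice t f) 2 volume).toReal := by
  have h := integral_norm_sq_eq_toReal_eLpNorm_sq (μ := volume)
    (hf.continuous_timeSlice t).aestronglyMeasurable
  simp only [norm_eq_abs, sq_abs] at h
  rw [← sqrt_sq ENNReal.toReal_nonneg, ← h]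
  rfl

/-- `‖Γ^γ u(t)‖_{L²} ≤ M` for all words `γ` of length at most `n`. The norm is
`ℝ≥0∞`-valued, so the bound includes square integrability whenever `M ≠ ∞`. -/
def GammaL2Le (n : ℕ) (t : ℝ) (M : ENNReal) (u : F3) : Prop :=
  ∀ γ : List (Fin 4), γ.length ≤ n → eLpNorm (timeSlice t (GIter γ u)) 2 volume ≤ M

variable {n : ℕ} {t : ℝ} {M : ENNReal} {u : F3}

theorem eLpNorm_timeSlice_const_smul_le {c : ℝ} (hc : |c| ≤ 1) (t : ℝ) (f : F3) :
    eLpNorm (timeSlice t (c • f)) 2 volume ≤ eLpNorm (timeSlice t f) 2 volume :=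
  eLpNorm_mono fun q => by
    simpa [timeSlice, abs_mul] using mul_le_of_le_one_left (abs_nonneg (f t q.1 q.2)) hc

theorem GammaL2Le.const_smul (h : GammaL2Le n t M u) (hu : Smooth3 u) {c : ℝ} (hc : |c| ≤ 1) :
    GammaL2Le n t M (c • u) := fun γ hγ => by
  rw [GIter_const_smul hu]
  exact (eLpNorm_timeSlice_const_smul_le hc t _).trans (h γ hγ)

theorem GammaL2Le.Om_of_radialF (h : GammaL2Le n t M u) (hu : Smooth3 u) (hr : RadialF u) :
    GammaL2Le n t M (Om u) := by
  rw [Om_eq_zero_of_radialF hu hr, ← zero_smul ℝ u]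
  exact h.const_smul hu (by simp)

theorem gammaL2Le_GIter {m : ℕ} (h : GammaL2Le n t M u) (β : List (Fin 4))
    (hβ : m + β.length ≤ n) : GammaL2Le m t M (GIter β u) := fun γ hγ => by
  rw [← GIter_append]
  exact h _ (by rw [List.length_append]; lia)

theorem gammaL2Le_Om_GIter {m : ℕ} (hu : Smooth3 u) (h : GammaL2Le n t M u)
    (hOm : GammaL2Le n t M (Om u)) (β : List (Fin 4)) (hβ : m + β.length ≤ n) :
    GammaL2Le m t ((β.length + 1) * M) (Om (GIter β u)) := by
  induction β generalizing m with
  | nil => simpa [GIter] using gammaL2Le_GIter hOm [] hβ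
  | cons a β ih =>
    intro γ hγ
    obtain ⟨c, hc, b, hcomm⟩ := exists_Om_GammaF_eq (hu.GIter β) a
    have hmain : Smooth3 (GIter (γ ++ [a]) (Om (GIter β u))) := (hu.GIter β).Om.GIter _
    have hrest : Smooth3 (c • GIter (γ ++ b :: β) u) := (hu.GIter _).const_smul c
    have hsplit : GIter γ (Om (GIter (a :: β) u))
        = GIter (γ ++ [a]) (Om (GIter β u)) + c • GIter (γ ++ b :: β) u := by
      simp only [GIter, GIter_append]
      rw [hcomm, GIter_add ((hu.GIter β).Om.GammaF a) (((hu.GIter β).GammaF b).const_smul c),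
        GIter_const_smul ((hu.GIter β).GammaF b)]
    rw [List.length_cons] at hβ
    calc eLpNorm (timeSlice t (GIter γ (Om (GIter (a :: β) u)))) 2 volume
        ≤ eLpNorm (timeSlice t (GIter (γ ++ [a]) (Om (GIter β u)))) 2 volume
          + eLpNorm (timeSlice t (c • GIter (γ ++ b :: β) u)) 2 volume := by
          rw [hsplit]
          exact eLpNorm_add_le (hmain.continuous_timeSlice t).aestronglyMeasurable
            (hrest.continuous_timeSlice t).aestronglyMeasurable one_le_two
      _ ≤ (β.length + 1) * M + M :=
          add_le_add (ih (m := m + 1) (by lia) _ (by simpa using hγ))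
            ((eLpNorm_timeSlice_const_smul_le hc t _).trans (h _ (by simp; lia)))
      _ = ((a :: β).length + 1) * M := by push_cast [List.length_cons]; ring

theorem h1NormSq_timeSlice_le (hu : Smooth3 u) (hsupp : HasCompactSupport (timeSlice t u))
    {K : ℝ} (hK : 0 ≤ K) (h : GammaL2Le 1 t (ENNReal.ofReal K) u) :
    h1NormSq (timeSlice t u) ≤ 3 * K ^ 2 := by
  have hword (γ : List (Fin 4)) (hγ : γ.length ≤ 1) :
      ∫ q, ‖timeSlice t (GIter γ u) q‖ ^ 2 ≤ K ^ 2 := by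
    rw [integral_norm_sq_eq_toReal_eLpNorm_sq
      ((hu.GIter γ).continuous_timeSlice t).aestronglyMeasurable]
    exact pow_le_pow_left₀ ENNReal.toReal_nonneg
      (ENNReal.toReal_le_of_le_ofReal hK (h γ hγ)) 2
  have h₀ : ∫ q, ‖timeSlice t u q‖ ^ 2 ≤ K ^ 2 := hword [] (by simp)
  have h₁ : ∫ q, ‖timeSlice t (px u) q‖ ^ 2 ≤ K ^ 2 := hword [1] (by simp)
  have h₂ : ∫ q, ‖timeSlice t (py u) q‖ ^ 2 ≤ K ^ 2 := hword [2] (by simp)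
  rw [h1NormSq_eq_integral_add (hu.contDiff_timeSlice (n := 1) t) hsupp,
    fieldDeriv_fst_timeSlice hu, fieldDeriv_snd_timeSlice hu]
  linarith

theorem one_add_rad_mul_sq_le (hu : Smooth3 u) (hsupp : HasCompactSupport (timeSlice t u))
    {K : ℝ} (hK : 0 ≤ K) (h : GammaL2Le 2 t (ENNReal.ofReal K) u)
    (hOm : GammaL2Le 1 t (ENNReal.ofReal K) (Om u)) (x y : ℝ) :
    (1 + rad x y) * u t x y ^ 2 ≤ 24 * K ^ 2 := by
  have hsupp₁ := hasCompactSupport_fieldDeriv hsupp fun _ => (1, 0)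
  have hsuppOm := hasCompactSupport_fieldDeriv hsupp rotField
  rw [fieldDeriv_fst_timeSlice hu] at hsupp₁
  rw [fieldDeriv_rotField_timeSlice hu] at hsuppOm
  have h₀ : h1NormSq (timeSlice t u) ≤ 3 * K ^ 2 :=
    h1NormSq_timeSlice_le hu hsupp hK (gammaL2Le_GIter h [] (by simp))
  have h₁ : h1NormSq (timeSlice t (px u)) ≤ 3 * K ^ 2 :=
    h1NormSq_timeSlice_le (hu.GammaF 1) hsupp₁ hK (gammaL2Le_GIter h [1] (by simp))
  have h₂ : h1NormSq (timeSlice t (Om u)) ≤ 3 * K ^ 2 :=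
    h1NormSq_timeSlice_le hu.Om hsuppOm hK hOm
  have hsobolev := one_add_rad_mul_norm_sq_le (hu.contDiff_timeSlice (n := 2) t) hsupp x y
  rw [fieldDeriv_fst_timeSlice hu, fieldDeriv_rotField_timeSlice hu, norm_eq_abs, sq_abs]
    at hsobolev
  simp only [timeSlice] at hsobolev h₀ h₁ h₂
  linarith

theorem sqrt_one_add_rad_mul_abs_GIter_le (hu : Smooth3 u) {K : ℝ} (hK : 0 ≤ K) (α : List (Fin 4))
    (h : GammaL2Le (α.length + 2) t (ENNReal.ofReal K) u)
    (hOm : GammaL2Le (α.length + 2) t (ENNReal.ofReal K) (Om u))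
    (hsupp : HasCompactSupport (timeSlice t (GIter α u))) (x y : ℝ) :
    √(1 + rad x y) * |GIter α u t x y| ≤ 5 * (α.length + 1) * K := by
  have hL : ENNReal.ofReal ((α.length + 1) * K) = (α.length + 1) * ENNReal.ofReal K := by
    rw [ENNReal.ofReal_mul (by positivity), ENNReal.ofReal_add (by positivity) zero_le_one,
      ENNReal.ofReal_natCast, ENNReal.ofReal_one]
  have hα : GammaL2Le 2 t (ENNReal.ofReal ((α.length + 1) * K)) (GIter α u) := fun γ hγ =>
    (gammaL2Le_GIter h α (by lia) γ hγ).trans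
      (ENNReal.ofReal_le_ofReal (le_mul_of_one_le_left hK (by simp)))
  have hOmα : GammaL2Le 1 t (ENNReal.ofReal ((α.length + 1) * K)) (Om (GIter α u)) := by
    rw [hL]
    exact gammaL2Le_Om_GIter hu h hOm α (by lia)
  have hsq := one_add_rad_mul_sq_le (hu.GIter α) hsupp (by positivity) hα hOmα x y
  have hrad : 0 ≤ 1 + rad x y := add_nonneg zero_le_one (sqrt_nonneg _)
  refine (sq_le_sq₀ (by positivity) (by positivity)).1 ?_
  rw [mul_pow, sq_sqrt hrad, sq_abs]
  linarith [sq_nonneg ((α.length + 1) * K)]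

theorem L2n_sq_add_le_En (θd w1 w2 zd : F3) (t : ℝ) {γ : List (Fin 4)} (hγ : γ.length ≤ n) :
    (L2n fun x y => GIter γ θd t x y) ^ 2 + (L2n fun x y => GIter γ w1 t x y) ^ 2
      + (L2n fun x y => GIter γ w2 t x y) ^ 2 + (L2n fun x y => GIter γ zd t x y) ^ 2
      ≤ En θd w1 w2 zd n t := by
  let term (k : ℕ) (w : Fin k → Fin 4) : ℝ :=
    (L2n fun x y => GIter (List.ofFn w) θd t x y) ^ 2
      + (L2n fun x y => GIter (List.ofFn w) w1 t x y) ^ 2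
      + (L2n fun x y => GIter (List.ofFn w) w2 t x y) ^ 2
      + (L2n fun x y => GIter (List.ofFn w) zd t x y) ^ 2
  have hnonneg (k : ℕ) (w : Fin k → Fin 4) : 0 ≤ term k w := by positivity
  have hword : term γ.length γ.get ≤ ∑ w, term γ.length w :=
    Finset.single_le_sum (fun w _ => hnonneg _ w) (Finset.mem_univ _)
  have hlength : ∑ w, term γ.length w ≤ ∑ k ∈ Finset.range (n + 1), ∑ w, term k w :=
    Finset.single_le_sum (f := fun k => ∑ w, term k w)
      (fun k _ => Finset.sum_nonneg fun w _ => hnonneg k w) (by simp; lia)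
  simpa only [En, term, List.ofFn_get] using hword.trans hlength

theorem gammaL2Le_of_L2n_sq_le (hu : Smooth3 u) {E : ℝ}
    (hsupp : ∀ γ, HasCompactSupport (timeSlice t (GIter γ u)))
    (h : ∀ γ : List (Fin 4), γ.length ≤ n → (L2n fun x y => GIter γ u t x y) ^ 2 ≤ E) :
    GammaL2Le n t (ENNReal.ofReal √E) u := fun γ hγ => by
  have hmem : MemLp (timeSlice t (GIter γ u)) 2 :=
    ((hu.GIter γ).continuous_timeSlice t).memLp_of_hasCompactSupport (hsupp γ)
  rw [ENNReal.le_ofReal_iff_toReal_le hmem.eLpNorm_ne_top (sqrt_nonneg E),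
    ← L2n_timeSlice (hu.GIter γ)]
  exact le_sqrt_of_sq_le (h γ hγ)

theorem gammaL2Le_sqrt_En {θd w1 w2 zd : F3} (hθ : Smooth3 θd) (hw1 : Smooth3 w1)
    (hw2 : Smooth3 w2) (hz : Smooth3 zd)
    (hsupp : ∀ γ, HasCompactSupport (timeSlice t (GIter γ θd)) ∧
      HasCompactSupport (timeSlice t (GIter γ w1)) ∧
      HasCompactSupport (timeSlice t (GIter γ w2)) ∧ HasCompactSupport (timeSlice t (GIter γ zd)))
    (n : ℕ) :
    let K := ENNReal.ofReal √(En θd w1 w2 zd n t)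
    GammaL2Le n t K θd ∧ GammaL2Le n t K w1 ∧ GammaL2Le n t K w2 ∧ GammaL2Le n t K zd := by
  have energy (γ : List (Fin 4)) (hγ : γ.length ≤ n) := L2n_sq_add_le_En θd w1 w2 zd t hγ
  exact ⟨gammaL2Le_of_L2n_sq_le hθ (fun γ => (hsupp γ).1) fun γ hγ => by nlinarith [energy γ hγ],
    gammaL2Le_of_L2n_sq_le hw1 (fun γ => (hsupp γ).2.1) fun γ hγ => by nlinarith [energy γ hγ],
    gammaL2Le_of_L2n_sq_le hw2 (fun γ => (hsupp γ).2.2.1) fun γ hγ => by nlinarith [energy γ hγ],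
    gammaL2Le_of_L2n_sq_le hz (fun γ => (hsupp γ).2.2.2) fun γ hγ => by nlinarith [energy γ hγ]⟩

end Energy

/-- **Weighted Sobolev estimate** (Lemma 2.3 (2)):
`σ^{1/2}(|Γ^αθ̇| + |Γ^αẇ| + |Γ^αż|)(t,x) ≤ C_α E_{|α|+2}(t)^{1/2}`,
with `C_α` independent of `t`, `T` and of the functions. -/
theorem weighted_pointwise_energy_bound (α : List (Fin 4)) :
    ∃ C > 0, ∀ T : ℝ, ∀ θd w1 w2 zd : F3,
      Smooth3 θd → Smooth3 w1 → Smooth3 w2 → Smooth3 zd →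
      RadialF θd → RadialF zd →
      (∃ W : ℝ → ℝ → ℝ, ContDiff ℝ (⊤ : ℕ∞) (fun q : ℝ × ℝ => W q.1 q.2) ∧
        ∀ t x y, rad x y ≠ 0 →
          w1 t x y = W t (rad x y) * x / rad x y ∧
          w2 t x y = W t (rad x y) * y / rad x y) →
      (∀ β : List (Fin 4), ∀ t ∈ Icc (0 : ℝ) T,
        HasCompactSupport (fun q : ℝ × ℝ => GIter β θd t q.1 q.2) ∧
        HasCompactSupport (fun q : ℝ × ℝ => GIter β w1 t q.1 q.2) ∧
        HasCompactSupport (fun q : ℝ × ℝ => GIter β w2 t q.1 q.2) ∧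
        HasCompactSupport (fun q : ℝ × ℝ => GIter β zd t q.1 q.2)) →
      ∀ t ∈ Icc (0 : ℝ) T, ∀ x y : ℝ,
        Real.sqrt (1 + rad x y) *
          (|GIter α θd t x y| + max (|GIter α w1 t x y|) (|GIter α w2 t x y|)
            + |GIter α zd t x y|)
          ≤ C * Real.sqrt (En θd w1 w2 zd (α.length + 2) t) := by
  refine ⟨15 * (α.length + 1), by positivity, ?_⟩
  rintro T θd w1 w2 zd hθ hw1 hw2 hz hθrad hzrad ⟨W, -, hW⟩ hsupp t ht x y
  obtain ⟨hθL2, hw1L2, hw2L2, hzL2⟩ :=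
    gammaL2Le_sqrt_En hθ hw1 hw2 hz (fun γ => hsupp γ t ht) (α.length + 2)
  obtain ⟨hθsupp, hw1supp, hw2supp, hzsupp⟩ := hsupp α t ht
  obtain ⟨hOm1, hOm2⟩ := Om_radial_vectorField hw1 hw2 hW
  have hK := sqrt_nonneg (En θd w1 w2 zd (α.length + 2) t)
  have hθbound := sqrt_one_add_rad_mul_abs_GIter_le hθ hK α hθL2
    (hθL2.Om_of_radialF hθ hθrad) hθsupp x y
  have hw1bound := sqrt_one_add_rad_mul_abs_GIter_le hw1 hK α hw1L2
    (hOm1 ▸ hw2L2.const_smul hw2 (by simp)) hw1supp x y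
  have hw2bound := sqrt_one_add_rad_mul_abs_GIter_le hw2 hK α hw2L2
    (hOm2 ▸ hw1L2.const_smul hw1 (by simp)) hw2supp x y
  have hzbound := sqrt_one_add_rad_mul_abs_GIter_le hz hK α hzL2
    (hzL2.Om_of_radialF hz hzrad) hzsupp x y
  rw [mul_add, mul_add, mul_max_of_nonneg _ _ (sqrt_nonneg _)]
  linarith [max_le hw1bound hw2bound]

end
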